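/- (Dirichlet aggregation; core of the representation-invariance theorem.) Fix integers K ≥ 1 and N_1, …, N_K ≥ 1, let S = {z ∈ ℝ^K : z_k > 0 for all k and Σ_k z_k < 1}, and let (Z_1, …, Z_K) be a random vector whose law has density with respect to Lebesgue measure proportional to ∏_{k=1}^K z_k^{N_k − 1} on S and 0 outside S. Let {I_1, …, I_L} be a partition of {1, …, K} and set Ñ_ℓ = Σ_{k ∈ I_ℓ} N_k and Z̃_ℓ = Σ_{k ∈ I_ℓ} Z_k. Then the law of (Z̃_1, …, Z̃_L) has density with respect to Lebesgue measure on ℝ^L proportional to ∏_{ℓ=1}^L t_ℓ^{Ñ_ℓ − 1} on S̃ = {t ∈ ℝ^L : t_ℓ > 0 for all ℓ and Σ_ℓ t_ℓ < 1} and 0 outside S̃. -/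

import Mathlib

open MeasureTheory

noncomputable def ddens (n : ℕ) (x : ℝ) : ENNReal :=
  if 0 < x then ENNReal.ofReal ((Real.Gamma n)⁻¹ * x ^ (n - 1) * Real.exp (-x)) else 0

noncomputable def dgam (n : ℕ) : Measure ℝ := volume.withDensity (ddens n)

lemma ddens_meas (n : ℕ) : Measurable (ddens n) :=
  Measurable.ite measurableSet_Ioi (by fun_prop) measurable_const

lemma dgam_eq (n : ℕ) (hn : 1 ≤ n) : dgam n = ProbabilityTheory.gammaMeasure n 1 := by
  unfold dgam ProbabilityTheory.gammaMeasure
  apply withDensity_congr_ae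
  have h0 : ∀ᵐ x : ℝ, x ≠ 0 := by simp [ae_iff, measure_singleton]
  filter_upwards [h0] with x hx
  unfold ddens
  split_ifs with h
  · rw [ProbabilityTheory.gammaPDF_of_nonneg h.le]
    congr 3
    · simp
    · rw [← Real.rpow_natCast]
      congr 1
      push_cast [hn]; rfl
    · rw [one_mul]
  · rw [ProbabilityTheory.gammaPDF_of_neg]
    exact lt_of_le_of_ne (not_lt.mp h) hx

lemma dgam_prob (n : ℕ) (hn : 1 ≤ n) : IsProbabilityMeasure (dgam n) := by
  rw [dgam_eq n hn]
  exact ProbabilityTheory.isProbabilityMeasure_gammaMeasure (by positivity) one_pos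

lemma dgam_integrable (r : ℂ) (hr : r.re = 1) (n : ℕ) :
    IntegrableOn (fun x : ℝ => (x : ℂ) ^ n * Complex.exp (-(r * x))) (Set.Ioi 0) := by
  have h := Real.GammaIntegral_convergent (s := n + 1) (by positivity)
  refine Integrable.mono' h (Continuous.aestronglyMeasurable (by fun_prop)) ?_
  refine (ae_restrict_iff' measurableSet_Ioi).mpr (ae_of_all _ fun x hx => ?_)
  have hx : 0 < x := hx
  rw [norm_mul, norm_pow, Complex.norm_real, Complex.norm_exp, Real.norm_of_nonneg hx.le]
  simp [hr, mul_comm]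

lemma dgam_int (r : ℂ) (hr : r.re = 1) (n : ℕ) :
    ∫ x : ℝ in Set.Ioi 0, (x : ℂ) ^ n * Complex.exp (-(r * x)) =
      (1 / r) ^ (n + 1) * (n.factorial : ℂ) := by
  have hr0 : r ≠ 0 := by rintro rfl; simp at hr
  induction n with
  | zero =>
    have := integral_exp_mul_complex_Ioi (a := -r) (by simp [hr]) 0
    simpa using this
  | succ n ih =>
    have hd : ∀ x ∈ Set.Ici (0 : ℝ), HasDerivAt
        (fun x : ℝ => (x : ℂ) ^ (n + 1) * Complex.exp (-(r * x)))
        (((n + 1 : ℕ) : ℂ) * ((x : ℂ) ^ n * Complex.exp (-(r * x))) -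
          r * ((x : ℂ) ^ (n + 1) * Complex.exp (-(r * x)))) x := by
      intro x _
      have h1 : HasDerivAt (fun z : ℂ => z ^ (n + 1) * Complex.exp (-(r * z)))
          (((n + 1 : ℕ) : ℂ) * ((x : ℂ) ^ n * Complex.exp (-(r * x))) -
          r * ((x : ℂ) ^ (n + 1) * Complex.exp (-(r * x)))) (x : ℂ) := by
        have h2 := (hasDerivAt_pow (n + 1) (x : ℂ)).mul
          (((hasDerivAt_id (x : ℂ)).const_mul r).neg.cexp)
        refine h2.congr_deriv ?_
        simp
        ring
      exact h1.comp_ofReal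
    have hi1 := (dgam_integrable r hr n).const_mul (((n + 1 : ℕ) : ℂ))
    have hi2 := (dgam_integrable r hr (n + 1)).const_mul r
    have ht : Filter.Tendsto (fun x : ℝ => (x : ℂ) ^ (n + 1) * Complex.exp (-(r * x)))
        Filter.atTop (nhds 0) := by
      rw [tendsto_zero_iff_norm_tendsto_zero]
      refine (Real.tendsto_pow_mul_exp_neg_atTop_nhds_zero (n + 1)).congr' ?_
      filter_upwards [Filter.eventually_gt_atTop 0] with x hx
      rw [norm_mul, norm_pow, Complex.norm_real, Complex.norm_exp, Real.norm_of_nonneg hx.le]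
      simp [hr]
    have h := integral_Ioi_of_hasDerivAt_of_tendsto' hd (hi1.sub hi2) ht
    rw [integral_sub hi1 hi2, integral_const_mul, integral_const_mul, ih] at h
    simp only [Complex.ofReal_zero, ne_eq, Nat.succ_ne_zero, not_false_eq_true, zero_pow,
      zero_mul, sub_zero] at h
    have h' := (sub_eq_zero.mp (by simpa using h)).symm
    rw [Nat.factorial_succ]
    push_cast at h' ⊢
    have h3 : ∀ a : ℂ, r * a = ((n : ℂ) + 1) * ((1 / r) ^ (n + 1) * (n.factorial : ℂ)) →
        a = (1 / r) ^ (n + 1 + 1) * (((n : ℂ) + 1) * (n.factorial : ℂ)) := by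
      intro a ha
      apply mul_left_cancel₀ hr0
      rw [ha, pow_succ (1 / r) (n + 1)]
      field_simp
    apply h3
    simpa using h'

lemma dgam_charFun (n : ℕ) (hn : 1 ≤ n) (t : ℝ) :
    charFun (dgam n) t = (1 / (1 - t * Complex.I)) ^ n := by
  have hG : Real.Gamma n ≠ 0 := (Real.Gamma_pos_of_pos (by positivity)).ne'
  have hG' : (Complex.Gamma n) ≠ 0 := by
    rw [← Complex.ofReal_natCast, Complex.Gamma_ofReal]; exact_mod_cast hG
  have key := dgam_int (1 - t * Complex.I) (by simp) (n - 1)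
  have hn' : n - 1 + 1 = n := by omega
  have hGn : Complex.Gamma n = ((n - 1).factorial : ℂ) := by
    rw [← Complex.Gamma_nat_eq_factorial, ← Nat.cast_add_one, hn']
  rw [hn', ← hGn] at key
  rw [charFun_apply_real, dgam, integral_withDensity_eq_integral_toReal_smul (ddens_meas n)]
  swap
  · refine ae_of_all _ fun x => ?_
    unfold ddens; split_ifs <;> simp
  have e : (fun x : ℝ => (ddens n x).toReal • Complex.exp (t * x * Complex.I)) =
      (Set.Ioi 0).indicator (fun x : ℝ => (Complex.Gamma n)⁻¹ *
        ((x : ℂ) ^ (n - 1) * Complex.exp (-((1 - t * Complex.I) * x)))) := by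
    ext x
    by_cases hx : 0 < x
    · rw [Set.indicator_of_mem (by exact hx)]
      simp only [ddens, if_pos hx]
      have hp : 0 < Real.Gamma n := Real.Gamma_pos_of_pos (by positivity)
      rw [ENNReal.toReal_ofReal (by positivity)]
      rw [Complex.real_smul, ← Complex.ofReal_natCast n,
        Complex.Gamma_ofReal]
      push_cast
      rw [show -((1 - (t : ℂ) * Complex.I) * x) = -x + t * x * Complex.I by ring, Complex.exp_add]
      ring
    · rw [Set.indicator_of_notMem (by exact hx)]
      simp [ddens, if_neg hx]
  rw [e, integral_indicator measurableSet_Ioi, integral_const_mul, key]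
  field_simp

lemma dlintegral_pi : ∀ {n : ℕ} (f : Fin n → ℝ → ENNReal) (_ : ∀ i, Measurable (f i)),
    ∫⁻ z : Fin n → ℝ, ∏ i, f i (z i) = ∏ i, ∫⁻ x, f i x := by
  intro n
  induction n with
  | zero => intro f _; simp [volume_pi]
  | succ n ih =>
    intro f hf
    have h := (volume_preserving_piFinSuccAbove (fun _ : Fin (n + 1) => ℝ) 0).symm
    rw [← h.lintegral_comp (by fun_prop)]
    simp_rw [MeasurableEquiv.piFinSuccAbove_symm_apply, Fin.insertNthEquiv,
        Fin.prod_univ_succ]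
    simp only [Equiv.coe_fn_mk, Fin.insertNth_zero, Fin.cons_zero, Fin.cons_succ]
    have := ih (fun i => f i.succ) (fun i => hf _)
    rw [← this]
    have hf' : ∀ i : Fin n, Measurable (f i.succ) := fun i => hf _
    exact lintegral_prod_mul (μ := volume) (ν := volume) (g := fun z : Fin n → ℝ => ∏ i, f i.succ (z i))
      (hf 0).aemeasurable (Measurable.aemeasurable (by fun_prop))

lemma dpi {n : ℕ} (N : Fin n → ℕ) (hN : ∀ i, 1 ≤ N i) :
    Measure.pi (fun i => dgam (N i)) = volume.withDensity (fun z => ∏ i, ddens (N i) (z i)) := by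
  have := fun i => dgam_prob (N i) (hN i)
  have hm := fun i => ddens_meas (N i)
  refine Measure.pi_eq fun s hs => ?_
  rw [withDensity_apply _ (.univ_pi hs), ← lintegral_indicator (.univ_pi hs)]
  have : ∀ z : Fin n → ℝ, (Set.univ.pi s).indicator (fun z => ∏ i, ddens (N i) (z i)) z =
      ∏ i, (s i).indicator (ddens (N i)) (z i) := by
    intro z
    by_cases h : z ∈ Set.univ.pi s
    · rw [Set.indicator_of_mem h]
      exact Finset.prod_congr rfl fun i _ => (Set.indicator_of_mem (h i trivial) _).symm
    · rw [Set.indicator_of_notMem h]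
      simp only [Set.mem_pi, Set.mem_univ, true_imp_iff, not_forall] at h
      obtain ⟨i, hi⟩ := h
      exact (Finset.prod_eq_zero (Finset.mem_univ i) (Set.indicator_of_notMem hi _)).symm
  simp_rw [this]
  rw [dlintegral_pi _ (fun i => (hm i).indicator (hs i))]
  refine Finset.prod_congr rfl fun i _ => ?_
  rw [lintegral_indicator (hs i), dgam, withDensity_apply _ (hs i)]

lemma dsplit {n : ℕ} (N : Fin n → ℕ) (hN : ∀ i, 1 ≤ N i) (c : ℝ) (hc : 0 < c) :
    volume.withDensity (fun z : Fin n → ℝ =>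
      if (∀ k, 0 < z k) ∧ ∑ k, z k < 1 then
        ENNReal.ofReal (c * ∏ k, z k ^ (N k - 1)) else 0) =
    (Measure.pi (fun i => dgam (N i))).withDensity (fun z => (fun s : ℝ =>
      if s < 1 then ENNReal.ofReal (c * (∏ i, Real.Gamma (N i)) * Real.exp s) else 0)
        (∑ i, z i)) := by
  have hm := fun i => ddens_meas (N i)
  rw [dpi N hN, ← withDensity_mul]
  · congr 1
    ext z
    simp only [Pi.mul_apply]
    by_cases h : ∀ k, 0 < z k
    · by_cases h1 : ∑ k, z k < 1
      · rw [if_pos ⟨h, h1⟩, if_pos h1]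
        have hG : ∀ i, 0 < Real.Gamma (N i) := fun i =>
          Real.Gamma_pos_of_pos (by have := hN i; positivity)
        have e : ∀ i, ddens (N i) (z i) =
          ENNReal.ofReal ((Real.Gamma (N i))⁻¹ * z i ^ (N i - 1) * Real.exp (-z i)) :=
          fun i => if_pos (h i)
        have hp : ∀ i, 0 ≤ (Real.Gamma (N i))⁻¹ * z i ^ (N i - 1) * Real.exp (-z i) := fun i => by
          have := hG i; have := h i; positivity
        simp_rw [e]
        rw [← ENNReal.ofReal_prod_of_nonneg (fun i _ => hp i),
          ← ENNReal.ofReal_mul (Finset.prod_nonneg fun i _ => hp i)]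
        congr 1
        simp only [Finset.prod_mul_distrib, Finset.prod_inv_distrib]
        rw [← Real.exp_sum, Finset.sum_neg_distrib, Real.exp_neg]
        have : (∏ i, Real.Gamma (N i)) ≠ 0 := Finset.prod_ne_zero_iff.mpr fun i _ => (hG i).ne'
        field_simp
      · rw [if_neg (fun h' => h1 h'.2), if_neg h1, mul_zero]
    · rw [if_neg (fun h' => h h'.1)]
      push Not at h
      obtain ⟨i, hi⟩ := h
      rw [Finset.prod_eq_zero (Finset.mem_univ i), zero_mul]
      simp [ddens, hi.not_gt]
  · fun_prop
  · exact Measurable.ite (measurableSet_lt (by fun_prop) (by fun_prop)) (by fun_prop) (by fun_prop)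

lemma dagg {K L : ℕ} (N : Fin K → ℕ) (hN : ∀ k, 1 ≤ N k) (p : Fin K → Fin L)
    (M : Fin L → ℕ) (hM : ∀ l, M l = ∑ k with p k = l, N k) (hM1 : ∀ l, 1 ≤ M l) :
    (Measure.pi (fun i => dgam (N i))).map (fun z => fun l => ∑ k with p k = l, z k) =
      Measure.pi (fun l => dgam (M l)) := by
  have := fun i => dgam_prob (N i) (hN i)
  have := fun i => dgam_prob (M i) (hM1 i)
  have hA : Measurable (fun z : Fin K → ℝ => fun l : Fin L => ∑ k with p k = l, z k) := by
    fun_prop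
  rw [← charFun_eq_pi_iff]
  intro t
  have h := charFun_pi (μ := fun i => dgam (N i)) (WithLp.toLp 2 (fun k => t (p k)))
  have e : ∏ i, charFun (dgam (M i)) (t i) = ∏ i, charFun (dgam (N i)) (t (p i)) := by
    simp_rw [fun i => dgam_charFun _ (hN i), fun i => dgam_charFun _ (hM1 i)]
    rw [← Finset.prod_fiberwise Finset.univ p]
    refine Finset.prod_congr rfl fun l _ => ?_
    rw [hM, ← Finset.prod_pow_eq_pow_sum]
    refine Finset.prod_congr rfl fun k hk => ?_
    rw [(Finset.mem_filter.mp hk).2]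
  rw [e]
  refine Eq.trans ?_ h
  rw [Measure.map_map (by fun_prop) hA, charFun_apply, charFun_apply, integral_map, integral_map]
  · refine integral_congr_ae (ae_of_all _ fun z => ?_)
    simp only [PiLp.inner_apply, Function.comp]
    congr 3
    rw [← Finset.sum_fiberwise Finset.univ p]
    refine Finset.sum_congr rfl fun l _ => ?_
    simp only [RCLike.inner_apply, conj_trivial, Finset.mul_sum]
    refine Finset.sum_congr rfl fun k hk => ?_
    rw [(Finset.mem_filter.mp hk).2]
  all_goals fun_prop

lemma dmap {α β : Type*} [MeasurableSpace α] [MeasurableSpace β] (μ : Measure α)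
    (f : α → β) (hf : Measurable f) (g : β → ENNReal) (hg : Measurable g) :
    (μ.withDensity (fun x => g (f x))).map f = (μ.map f).withDensity g := by
  ext s hs
  rw [Measure.map_apply hf hs, withDensity_apply _ (hf hs), withDensity_apply _ hs,
    setLIntegral_map hs hg hf]


/-- Dirichlet aggregation, core of representation invariance: if `(Z 1, …, Z K)`
has density proportional to `∏ k, z k ^ (N k − 1)` on `S = {z : ∀ k, z k > 0, Σ z k < 1}`
(`0` outside `S`) and `{I 1, …, I L}` is a partition of `{1, …, K}`, then with
`Ñ ℓ = Σ_{k ∈ I ℓ} N k` the aggregated vector `Z̃ ℓ = Σ_{k ∈ I ℓ} Z k` has density proportional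
to `∏ ℓ, t ℓ ^ (Ñ ℓ − 1)` on `S̃ = {t : ∀ ℓ, t ℓ > 0, Σ t ℓ < 1}` (`0` outside `S̃`). -/
theorem dirichlet_dsm_stmt15
    {Ω : Type*} [MeasurableSpace Ω] (P : Measure Ω) [IsProbabilityMeasure P]
    {K L : ℕ} (hK : 1 ≤ K) (N : Fin K → ℕ) (hN : ∀ k, 1 ≤ N k)
    (Z : Ω → (Fin K → ℝ)) (hZmeas : Measurable Z)
    (c : ℝ) (hc : 0 < c)
    (hZlaw : Measure.map Z P = volume.withDensity (fun z : Fin K → ℝ =>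
      if (∀ k, 0 < z k) ∧ ∑ k, z k < 1 then
        ENNReal.ofReal (c * ∏ k, z k ^ (N k - 1)) else 0))
    (I : Fin L → Finset (Fin K))
    (hne : ∀ l, (I l).Nonempty)
    (hdisj : ∀ l l', l ≠ l' → Disjoint (I l) (I l'))
    (hcover : ∀ k, ∃ l, k ∈ I l)
    (Ntil : Fin L → ℕ) (hNtil : ∀ l, Ntil l = ∑ k ∈ I l, N k) :
    ∃ c' : ℝ, 0 < c' ∧
      Measure.map (fun ω => fun l => ∑ k ∈ I l, Z ω k) P =
        volume.withDensity (fun t : Fin L → ℝ =>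
          if (∀ l, 0 < t l) ∧ ∑ l, t l < 1 then
            ENNReal.ofReal (c' * ∏ l, t l ^ (Ntil l - 1)) else 0) := by
  choose p hp using hcover
  have hI : ∀ l, I l = Finset.univ.filter (fun k => p k = l) := by
    intro l
    ext k
    simp only [Finset.mem_filter, Finset.mem_univ, true_and]
    constructor
    · intro hk
      by_contra hne'
      exact Finset.disjoint_left.mp (hdisj _ _ hne') (hp k) hk
    · rintro rfl
      exact hp k
  have hM1 : ∀ l, 1 ≤ Ntil l := by
    intro l
    obtain ⟨k, hk⟩ := hne l
    rw [hNtil]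
    exact (hN k).trans (Finset.single_le_sum (f := N) (fun _ _ => Nat.zero_le _) hk)
  have hGN : ∀ i, 0 < Real.Gamma (N i) := fun i =>
    Real.Gamma_pos_of_pos (by have := hN i; positivity)
  have hGM : ∀ i, 0 < Real.Gamma (Ntil i) := fun i =>
    Real.Gamma_pos_of_pos (by have := hM1 i; positivity)
  have hPN : 0 < ∏ i, Real.Gamma (N i) := Finset.prod_pos fun i _ => hGN i
  have hPM : 0 < ∏ i, Real.Gamma (Ntil i) := Finset.prod_pos fun i _ => hGM i
  have hc' : 0 < c * (∏ i, Real.Gamma (N i)) / ∏ i, Real.Gamma (Ntil i) := by positivity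
  refine ⟨_, hc', ?_⟩
  rw [dsplit Ntil hM1 _ hc', div_mul_cancel₀ _ hPM.ne']
  rw [dsplit N hN c hc] at hZlaw
  have hNt : ∀ l, Ntil l = ∑ k with p k = l, N k := fun l => by rw [hNtil, hI]
  simp_rw [hI]
  have hA : Measurable (fun z : Fin K → ℝ => fun l : Fin L => ∑ k with p k = l, z k) := by
    fun_prop
  rw [← dagg N hN p Ntil hNt hM1, ← dmap _ _ hA, ← Function.comp_def (fun z : Fin K → ℝ =>
    fun l : Fin L => ∑ k with p k = l, z k) Z, ← Measure.map_map hA hZmeas, hZlaw]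
  · simp_rw [Finset.sum_fiberwise]
  · exact Measurable.ite (measurableSet_lt (by fun_prop) (by fun_prop)) (by fun_prop) (by fun_prop)
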